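/- For every claim C : Ω → ℝ^d and every p ∈ ℝ^d: p belongs to the indifference buy price bound bd P^b(C) if and only if (i) V(x0 − p, C) ⊇ V(x0, 0) and (ii) for every ε ∈ ℝ^d with all coordinates strictly positive, V(x0 − p − ε, C) ⊉ V(x0, 0). -/

import Mathlib

open Pointwise

/-!
The price set is a lower set, so `p` is interior exactly when some `p + ε` with `ε` strictly
positive is still a price; hence the theorem amounts to the price set being closed. Closedness
comes from concavity: `x` lies between `x - e` and every `x + δ • e`. If `v` is attainable, up to
closure, at every `x + δ • e`, then mixing it with a single `t` attainable at `x - e` puts the open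
segment from `t` to `v` into the closed value set at `x`, and `v` is a limit of that segment.
-/

section LowerSets

variable {ι : Type*} [Finite ι] {s : Set (ι → ℝ)}

theorem mem_interior_iff_exists_add_mem_of_isLowerSet (hs : IsLowerSet s) {p : ι → ℝ} :
    p ∈ interior s ↔ ∃ ε : ι → ℝ, (∀ k, 0 < ε k) ∧ p + ε ∈ s := by
  constructor
  · intro hp
    have hlim : Filter.Tendsto (fun δ : ℝ => p + δ • (1 : ι → ℝ)) (nhdsWithin 0 (Set.Ioi 0))
        (nhds p) := by
      have hcont : Continuous fun δ : ℝ => p + δ • (1 : ι → ℝ) := by fun_prop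
      exact (hcont.tendsto' 0 p (by simp)).mono_left nhdsWithin_le_nhds
    obtain ⟨δ, hδs, hδ⟩ :=
      ((hlim.eventually (mem_interior_iff_mem_nhds.1 hp)).and self_mem_nhdsWithin).exists
    exact ⟨δ • 1, fun k => by simpa using hδ, hδs⟩
  · rintro ⟨ε, hε, hpε⟩
    exact hs.mem_interior_of_forall_lt (subset_closure hpε) fun k => by simpa using hε k

theorem mem_frontier_iff_of_isLowerSet_of_isClosed (hs : IsLowerSet s) (hclosed : IsClosed s)
    {p : ι → ℝ} :
    p ∈ frontier s ↔ p ∈ s ∧ ∀ ε : ι → ℝ, (∀ k, 0 < ε k) → p + ε ∉ s := by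
  rw [hclosed.frontier_eq, Set.mem_sdiff, mem_interior_iff_exists_add_mem_of_isLowerSet hs]
  simp only [not_exists, not_and]

theorem isClosed_of_isLowerSet_of_forall_sub_smul_one_mem (hs : IsLowerSet s)
    (h : ∀ p : ι → ℝ, (∀ δ : ℝ, 0 < δ → p - δ • (1 : ι → ℝ) ∈ s) → p ∈ s) : IsClosed s :=
  isClosed_of_closure_subset fun p hp => h p fun _ hδ =>
    interior_subset (hs.mem_interior_of_forall_lt hp fun k => by simpa using hδ)

end LowerSets

/-! For Minkowski operations and inclusion, `ConcaveOn ℝ Set.univ H` says that the graph of the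
set-valued map `H` is convex. -/

section SetValuedMaps

variable {E F : Type*} [AddCommGroup E] [Module ℝ E] [AddCommGroup F] [Module ℝ F]

theorem concaveOn_univ_of_smul_add_one_sub_smul_subset {H : E → Set F}
    (h : ∀ (x y : E) (a : ℝ), 0 ≤ a → a ≤ 1 →
      a • H x + (1 - a) • H y ⊆ H (a • x + (1 - a) • y)) : ConcaveOn ℝ Set.univ H := by
  refine ⟨convex_univ, fun x _ y _ a b ha hb hab => ?_⟩
  obtain rfl := eq_sub_of_add_eq' hab
  exact h x y a ha (sub_nonneg.1 hb)

variable [TopologicalSpace F] [ContinuousAdd F] [ContinuousSMul ℝ F]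

theorem smul_add_smul_mem_closure_of_concaveOn {H : E → Set F} (hH : ConcaveOn ℝ Set.univ H)
    {x y : E} {v w : F} (hv : v ∈ closure (H x)) (hw : w ∈ closure (H y)) {a b : ℝ}
    (ha : 0 ≤ a) (hb : 0 ≤ b) (hab : a + b = 1) :
    a • v + b • w ∈ closure (H (a • x + b • y)) :=
  map_mem_closure₂ (f := fun v w => a • v + b • w) (by fun_prop) hv hw fun _ hv' _ hw' =>
    hH.2 trivial trivial ha hb hab
      (Set.add_mem_add (Set.smul_mem_smul_set hv') (Set.smul_mem_smul_set hw'))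

theorem mem_closure_of_forall_mem_closure_add_smul {H : E → Set F}
    (hH : ConcaveOn ℝ Set.univ H) {x e : E} (hne : (H (x - e)).Nonempty) {v : F}
    (hv : ∀ δ : ℝ, 0 < δ → v ∈ closure (H (x + δ • e))) : v ∈ closure (H x) := by
  obtain ⟨t, ht⟩ := hne
  have hsegment : openSegment ℝ t v ⊆ closure (H x) := by
    rintro _ ⟨a, b, ha, hb, hab, rfl⟩
    have hx : a • (x - e) + b • (x + (a / b) • e) = x := by
      calc a • (x - e) + b • (x + (a / b) • e)
          = (a + b) • x + (b * (a / b) - a) • e := by module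
        _ = x := by rw [hab, mul_div_cancel₀ _ hb.ne', sub_self, one_smul, zero_smul, add_zero]
    have hmix := smul_add_smul_mem_closure_of_concaveOn hH (subset_closure ht)
      (hv (a / b) (div_pos ha hb)) ha.le hb.le hab
    rwa [hx] at hmix
  exact closure_minimal hsegment isClosed_closure
    (segment_subset_closure_openSegment (right_mem_segment ℝ t v))

end SetValuedMaps

theorem nonempty_of_add_const_mem {E Ω : Type*} [AddCommGroup E] {A : E → Set (Ω → E)}
    (hA : ∀ (x : E) (W : Ω → E), W ∈ A x → ∀ c : E, (fun ω => W ω + c) ∈ A (x + c)) {x y : E}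
    (hx : (A x).Nonempty) : (A y).Nonempty := by
  obtain ⟨W, hW⟩ := hx
  exact ⟨_, by simpa only [add_sub_cancel] using hA x W hW (y - x)⟩

section Prices

variable {ι F : Type*}

theorem isLowerSet_setOf_subset_closure_sub [TopologicalSpace F] {H : (ι → ℝ) → Set F}
    (hmono : Monotone H) (T : Set F) (x₀ : ι → ℝ) :
    IsLowerSet {p | T ⊆ closure (H (x₀ - p))} :=
  fun _ _ hqp hp => hp.trans (closure_mono (hmono (sub_le_sub_left hqp x₀)))

theorem isClosed_setOf_subset_closure_sub [Finite ι] [AddCommGroup F] [Module ℝ F]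
    [TopologicalSpace F] [ContinuousAdd F] [ContinuousSMul ℝ F] {H : (ι → ℝ) → Set F}
    (hH : ConcaveOn ℝ Set.univ H) (hmono : Monotone H)
    (hne : ∀ x y, (H x).Nonempty → (H y).Nonempty) (T : Set F) (x₀ : ι → ℝ) :
    IsClosed {p | T ⊆ closure (H (x₀ - p))} := by
  refine isClosed_of_isLowerSet_of_forall_sub_smul_one_mem
    (isLowerSet_setOf_subset_closure_sub hmono T x₀) fun p hp v hvT => ?_
  have hv : ∀ δ : ℝ, 0 < δ → v ∈ closure (H (x₀ - p + δ • 1)) := fun δ hδ => by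
    simpa only [sub_sub_eq_add_sub, add_sub_right_comm] using hp δ hδ hvT
  exact mem_closure_of_forall_mem_closure_add_smul hH
    (hne _ _ (closure_nonempty_iff.1 ⟨v, hv 1 one_pos⟩)) hv

end Prices

section ValueSets

variable {E X F : Type*}

/-- The utility levels dominated by the utility of a position available from the endowment `x`:
the lower hull of the image `U '' A x`. -/
def attainableUtilities [LE F] (U : X → F) (A : E → Set X) (x : E) : Set F :=
  {v | ∃ W ∈ A x, v ≤ U W}

/-- The value set `V(x, C)`: the closure of the utility levels attainable from the endowment `x`
when the claim `C` is received on top of the chosen position. -/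
def valueSet [Add X] [LE F] [TopologicalSpace F] (U : X → F) (A : E → Set X) (x : E) (C : X) :
    Set F :=
  closure (attainableUtilities (fun W => U (W + C)) A x)

/-- The set-valued buy price `P^b(C)`: the payments `p` for the claim `C` that leave an investor
with endowment `x₀` at least as well off as without the claim. -/
def buyPrices [Sub E] [AddZeroClass X] [LE F] [TopologicalSpace F] (U : X → F) (A : E → Set X)
    (x₀ : E) (C : X) : Set E :=
  {p | valueSet U A x₀ 0 ⊆ valueSet U A (x₀ - p) C}

theorem attainableUtilities_mono [Preorder E] [LE F] (U : X → F) {A : E → Set X}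
    (hA : Monotone A) : Monotone (attainableUtilities U A) :=
  fun _ _ hxy _ ⟨W, hW, hv⟩ => ⟨W, hA hxy hW, hv⟩

theorem attainableUtilities_nonempty_iff [Preorder F] {U : X → F} {A : E → Set X} {x : E} :
    (attainableUtilities U A x).Nonempty ↔ (A x).Nonempty :=
  ⟨fun ⟨_, W, hW, _⟩ => ⟨W, hW⟩, fun ⟨W, hW⟩ => ⟨U W, W, hW, le_rfl⟩⟩

theorem concaveOn_attainableUtilities [AddCommGroup E] [Module ℝ E] [AddCommGroup X] [Module ℝ X]
    [AddCommGroup F] [PartialOrder F] [IsOrderedAddMonoid F] [Module ℝ F] [PosSMulMono ℝ F]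
    {U : X → F} (hU : ConcaveOn ℝ Set.univ U) {A : E → Set X} (hA : ConcaveOn ℝ Set.univ A) :
    ConcaveOn ℝ Set.univ (attainableUtilities U A) := by
  refine ⟨convex_univ, fun x _ y _ a b ha hb hab => ?_⟩
  rintro _ ⟨_, ⟨v, ⟨W, hW, hv⟩, rfl⟩, _, ⟨w, ⟨Y, hY, hw⟩, rfl⟩, rfl⟩
  refine ⟨a • W + b • Y, hA.2 trivial trivial ha hb hab
    (Set.add_mem_add (Set.smul_mem_smul_set hW) (Set.smul_mem_smul_set hY)), ?_⟩
  calc a • v + b • w ≤ a • U W + b • U Y := by gcongr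
    _ ≤ U (a • W + b • Y) := hU.2 trivial trivial ha hb hab

end ValueSets

theorem stmt13_general {ι X F : Type*} [Finite ι] [AddCommGroup X] [Module ℝ X]
    [AddCommGroup F] [PartialOrder F] [IsOrderedAddMonoid F] [Module ℝ F] [PosSMulMono ℝ F]
    [TopologicalSpace F] [ContinuousAdd F] [ContinuousSMul ℝ F]
    {U : X → F} (hU : ConcaveOn ℝ Set.univ U)
    {A : (ι → ℝ) → Set X} (hA : ConcaveOn ℝ Set.univ A) (hAmono : Monotone A)
    (hne : ∀ x y, (A x).Nonempty → (A y).Nonempty) (x₀ : ι → ℝ) (C : X) (p : ι → ℝ) :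
    p ∈ frontier (buyPrices U A x₀ C) ↔
      (valueSet U A x₀ 0 ⊆ valueSet U A (x₀ - p) C ∧
        ∀ ε : ι → ℝ, (∀ k, 0 < ε k) →
          ¬ valueSet U A x₀ 0 ⊆ valueSet U A (x₀ - p - ε) C) := by
  have hconc := concaveOn_attainableUtilities (hU.translate_left C) hA
  have hmono := attainableUtilities_mono (fun W => U (W + C)) hAmono
  have hlower : IsLowerSet (buyPrices U A x₀ C) := isLowerSet_setOf_subset_closure_sub hmono _ x₀
  have hclosed : IsClosed (buyPrices U A x₀ C) :=
    isClosed_setOf_subset_closure_sub hconc hmono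
      (fun x y => by simpa only [attainableUtilities_nonempty_iff] using hne x y) _ x₀
  simp only [sub_sub]
  exact mem_frontier_iff_of_isLowerSet_of_isClosed hlower hclosed

section ExpectedUtility

theorem concaveOn_finset_sum {𝕜 E β ι : Type*} [Semiring 𝕜] [PartialOrder 𝕜] [AddCommMonoid E]
    [Module 𝕜 E] [AddCommMonoid β] [PartialOrder β] [IsOrderedAddMonoid β] [Module 𝕜 β]
    {s : Set E} (hs : Convex 𝕜 s) (t : Finset ι) {f : ι → E → β}
    (hf : ∀ i ∈ t, ConcaveOn 𝕜 s (f i)) : ConcaveOn 𝕜 s fun x => ∑ i ∈ t, f i x := by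
  rw [← Finset.sum_fn]
  exact Finset.sum_induction f (ConcaveOn 𝕜 s) (fun _ _ => ConcaveOn.add) (concaveOn_const 0 hs) hf

theorem concaveOn_pi {𝕜 E ι : Type*} {β : ι → Type*} [Semiring 𝕜] [PartialOrder 𝕜]
    [AddCommMonoid E] [SMul 𝕜 E] [∀ i, AddCommMonoid (β i)] [∀ i, PartialOrder (β i)]
    [∀ i, SMul 𝕜 (β i)] {s : Set E} (hs : Convex 𝕜 s) {f : E → ∀ i, β i}
    (hf : ∀ i, ConcaveOn 𝕜 s fun x => f x i) : ConcaveOn 𝕜 s f :=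
  ⟨hs, fun _ hx _ hy _ _ ha hb hab i => (hf i).2 hx hy ha hb hab⟩

variable {Ω I J X : Type*} [Fintype Ω]

/-- The vector of expected utilities of a random position `W`, one component for each utility
function `u i` and each model `Q j`, the latter given by its weights on the states. -/
def expectedUtility (Q : J → Ω → ℝ) (u : I → X → ℝ) (W : Ω → X) : I × J → ℝ :=
  fun ij => ∑ ω : Ω, Q ij.2 ω * u ij.1 (W ω)

theorem concaveOn_expectedUtility [AddCommGroup X] [Module ℝ X] {Q : J → Ω → ℝ}
    (hQ : ∀ j ω, 0 ≤ Q j ω) {u : I → X → ℝ} (hu : ∀ i, ConcaveOn ℝ Set.univ (u i)) :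
    ConcaveOn ℝ Set.univ (expectedUtility Q u) :=
  concaveOn_pi convex_univ fun ij => concaveOn_finset_sum convex_univ Finset.univ fun ω _ =>
    ((hu ij.1).comp_linearMap (LinearMap.proj ω : (Ω → X) →ₗ[ℝ] X)).smul (hQ ij.2 ω)

end ExpectedUtility

theorem stmt13
    {d r s : ℕ} (hd : 0 < d) (hr : 0 < r) (hs : 0 < s)
    {Ω : Type} [Fintype Ω] [Nonempty Ω]
    (Q : Fin s → Ω → ℝ)
    (hQ0 : ∀ j ω, 0 ≤ Q j ω) (hQ1 : ∀ j, ∑ ω : Ω, Q j ω = 1)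
    (u : Fin r → (Fin d → ℝ) → ℝ)
    (hcont : ∀ i, Continuous (u i))
    (hconc : ∀ i, ConcaveOn ℝ Set.univ (u i))
    (hmono : ∀ i, Monotone (u i))
    (hstrict : ∀ i (x y : Fin d → ℝ), (∀ k, x k < y k) → u i x < u i y)
    (A : (Fin d → ℝ) → Set (Ω → Fin d → ℝ))
    (hAconv : ∀ x, Convex ℝ (A x))
    (hAcomb : ∀ (x y : Fin d → ℝ) (a : ℝ), 0 ≤ a → a ≤ 1 →
      a • A x + (1 - a) • A y ⊆ A (a • x + (1 - a) • y))
    (hAmono : ∀ x y : Fin d → ℝ, x ≤ y → A x ⊆ A y)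
    (hAtr : ∀ (x : Fin d → ℝ) (W : Ω → Fin d → ℝ), W ∈ A x →
      ∀ c : Fin d → ℝ, (fun ω => W ω + c) ∈ A (x + c))
    (hAcont : ∀ (x : Fin d → ℝ) (xk : ℕ → Fin d → ℝ), Antitone xk →
      Filter.Tendsto xk Filter.atTop (nhds x) → A x = ⋂ n, A (xk n))
    (x0 : Fin d → ℝ) :
    let U : (Ω → Fin d → ℝ) → (Fin r × Fin s → ℝ) :=
      fun W ij => ∑ ω : Ω, Q ij.2 ω * u ij.1 (W ω)
    let V : (Fin d → ℝ) → (Ω → Fin d → ℝ) → Set (Fin r × Fin s → ℝ) :=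
      fun x C => closure {v | ∃ W ∈ A x, v ≤ U (W + C)}
    let Pb : (Ω → Fin d → ℝ) → Set (Fin d → ℝ) :=
      fun C => {p | V x0 0 ⊆ V (x0 - p) C}
    let Ps : (Ω → Fin d → ℝ) → Set (Fin d → ℝ) :=
      fun C => {p | V x0 0 ⊆ V (x0 + p) (-C)}
    ∀ (C : Ω → Fin d → ℝ) (p : Fin d → ℝ),
      p ∈ frontier (Pb C) ↔
        (V x0 0 ⊆ V (x0 - p) C ∧
          ∀ ε : Fin d → ℝ, (∀ k, 0 < ε k) → ¬ V x0 0 ⊆ V (x0 - p - ε) C) := by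
  intro U _ _ _ C p
  have hU : ConcaveOn ℝ Set.univ U := concaveOn_expectedUtility hQ0 hconc
  have hA : ConcaveOn ℝ Set.univ A := concaveOn_univ_of_smul_add_one_sub_smul_subset hAcomb
  exact stmt13_general hU hA hAmono (fun _ _ => nonempty_of_add_const_mem hAtr) x0 C p
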